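/- Let t₀ ≥ 1, b > 1, and let σ, β, α be real numbers with 0 < σ < β < 1, α > 0, bα < 1, and β − σ = 1 − (b−1)α. Then there exists a constant C > 0 such that for every t ≥ t₀ one has ∫_{t₀}^{t} s^{2/(b+1)} e^{−βs} e^{−bα(t−s)} ds ≤ C e^{−αt}. -/

import Mathlib

open intervalIntegral

/-!
When `α ≤ γ` and `s ≤ t`, the kernel satisfies `e^{-γ(t-s)} ≤ e^{αs} e^{-αt}`, so convolving `g ≥ 0`
with it yields decay like `e^{-αt}` as soon as `∫ g(s) e^{αs} ds` converges. For
`g(s) = s^p e^{-βs}` with `α < β` this is a Gamma integral with rate `β - α`. In the theorem,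
the relation between the parameters says that `β - α = σ + (1 - bα)`, which is positive.
-/

open MeasureTheory Set

theorem exp_neg_mul_sub_le {α γ s t : ℝ} (hαγ : α ≤ γ) (hst : s ≤ t) :
    Real.exp (-γ * (t - s)) ≤ Real.exp (α * s) * Real.exp (-α * t) := by
  rw [← Real.exp_add, Real.exp_le_exp]
  linarith [mul_le_mul_of_nonneg_right hαγ (sub_nonneg.2 hst)]

theorem intervalIntegral_mul_exp_neg_mul_sub_le {μ : Measure ℝ} {S : Set ℝ} {g : ℝ → ℝ}
    {a t α γ : ℝ} (hat : a ≤ t) (hS : Ioc a t ⊆ S) (hαγ : α ≤ γ) (hg : 0 ≤ᵐ[μ.restrict S] g)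
    (hgα : IntegrableOn (fun s ↦ g s * Real.exp (α * s)) S μ) :
    ∫ s in a..t, g s * Real.exp (-γ * (t - s)) ∂μ ≤
      (∫ s in S, g s * Real.exp (α * s) ∂μ) * Real.exp (-α * t) := by
  have hg' : 0 ≤ᵐ[μ.restrict (Ioc a t)] g := ae_restrict_of_ae_restrict_of_subset hS hg
  have weighted_nonneg : 0 ≤ᵐ[μ.restrict S] fun s ↦ g s * Real.exp (α * s) := by
    filter_upwards [hg] with s hs using mul_nonneg hs (Real.exp_nonneg _)
  rw [intervalIntegral.integral_of_le hat]
  calc ∫ s in Ioc a t, g s * Real.exp (-γ * (t - s)) ∂μ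
      ≤ ∫ s in Ioc a t, g s * Real.exp (α * s) * Real.exp (-α * t) ∂μ := by
        refine integral_mono_of_nonneg ?_ ((hgα.mono_set hS).mul_const _) ?_
        · filter_upwards [hg'] with s hs using mul_nonneg hs (Real.exp_nonneg _)
        · filter_upwards [hg', ae_restrict_mem measurableSet_Ioc] with s hs hst
          rw [mul_assoc]
          exact mul_le_mul_of_nonneg_left (exp_neg_mul_sub_le hαγ hst.2) hs
    _ = (∫ s in Ioc a t, g s * Real.exp (α * s) ∂μ) * Real.exp (-α * t) :=
        MeasureTheory.integral_mul_const _ _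
    _ ≤ (∫ s in S, g s * Real.exp (α * s) ∂μ) * Real.exp (-α * t) :=
        mul_le_mul_of_nonneg_right (setIntegral_mono_set hgα weighted_nonneg hS.eventuallyLE)
          (Real.exp_nonneg _)

theorem integral_estimate_I1_general {t₀ t p α β γ : ℝ} (ht₀ : 0 ≤ t₀) (ht : t₀ ≤ t)
    (hp : -1 < p) (hαβ : α < β) (hαγ : α ≤ γ) :
    ∫ s in t₀..t, s ^ p * Real.exp (-β * s) * Real.exp (-γ * (t - s)) ≤
      (1 / (β - α)) ^ (p + 1) * Real.Gamma (p + 1) * Real.exp (-α * t) := by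
  have weight_eq (s : ℝ) :
      s ^ p * Real.exp (-β * s) * Real.exp (α * s) = s ^ p * Real.exp (-(β - α) * s) := by
    rw [mul_assoc, ← Real.exp_add]
    ring_nf
  have gamma_integral :
      ∫ s in Ioi (0 : ℝ), s ^ p * Real.exp (-β * s) * Real.exp (α * s) =
        (1 / (β - α)) ^ (p + 1) * Real.Gamma (p + 1) := by
    simpa only [weight_eq, ← neg_mul, add_sub_cancel_right] using
      Real.integral_rpow_mul_exp_neg_mul_Ioi (neg_lt_iff_pos_add.1 hp) (sub_pos.2 hαβ)
  have integrable :
      IntegrableOn (fun s : ℝ ↦ s ^ p * Real.exp (-β * s) * Real.exp (α * s)) (Ioi 0) := by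
    simpa only [weight_eq, Real.rpow_one] using
      integrableOn_rpow_mul_exp_neg_mul_rpow hp one_pos (sub_pos.2 hαβ)
  have nonneg : 0 ≤ᵐ[volume.restrict (Ioi 0)] fun s : ℝ ↦ s ^ p * Real.exp (-β * s) := by
    filter_upwards [ae_restrict_mem measurableSet_Ioi] with s (hs : 0 < s)
    exact mul_nonneg (Real.rpow_nonneg hs.le _) (Real.exp_nonneg _)
  rw [← gamma_integral]
  exact intervalIntegral_mul_exp_neg_mul_sub_le ht
    (Ioc_subset_Ioi_self.trans (Ioi_subset_Ioi ht₀)) hαγ nonneg integrable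

/-- Key integral estimate for the term `I₁` over `[t₀, t]`:
`∫_{t₀}^{t} s^{2/(b+1)} e^{-βs} e^{-bα(t-s)} ds ≤ C e^{-αt}`. -/
theorem integral_estimate_I1 (t₀ b σ β α : ℝ) (ht₀ : 1 ≤ t₀) (hb : 1 < b)
    (hσ : 0 < σ) (hσβ : σ < β) (hβ : β < 1) (hα : 0 < α) (hbα : b * α < 1)
    (hrel : β - σ = 1 - (b - 1) * α) :
    ∃ C : ℝ, 0 < C ∧ ∀ t : ℝ, t₀ ≤ t →
      (∫ s in t₀..t, s ^ (2 / (b + 1)) * Real.exp (-β * s) *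
          Real.exp (-(b * α) * (t - s))) ≤ C * Real.exp (-α * t) := by
  have hp : 0 < 2 / (b + 1) := by positivity
  have hαβ : 0 < β - α := by linarith
  have hC : 0 < (1 / (β - α)) ^ (2 / (b + 1) + 1) * Real.Gamma (2 / (b + 1) + 1) := by positivity
  exact ⟨_, hC, fun t ht ↦ integral_estimate_I1_general (zero_le_one.trans ht₀) ht
    (neg_one_lt_zero.trans hp) (sub_pos.1 hαβ) (le_mul_of_one_le_left hα.le hb.le)⟩
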